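/- arXiv:2402.13854 — 2 statements merged into one kernel-verified Lean document; each statement's English description precedes it below -/
import Mathlib

section
/- Let Q ∈ ℂ^{n×n} and define F[Q] : (ℂ^n)^4 → ℂ by F[Q](z₁,z₂,z₃,z₄) = ⟨Q z₁, z₂⟩⟨Q z₃, z₄⟩ + ⟨Q z₃, z₂⟩⟨Q z₁, z₄⟩, where ⟨·,·⟩ is the standard Hermitian inner product on ℂ^n. Then for two matrices Q₁, Q₂ ∈ ℂ^{n×n}, F[Q₁] = F[Q₂] (as functions of all four arguments) if and only if Q₁ = Q₂ or Q₁ = -Q₂. -/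
open scoped ComplexConjugate

/-- The standard Hermitian inner product on `ℂⁿ`, conjugate-linear in the first argument. -/
noncomputable def hermInner {n : ℕ} (z w : Fin n → ℂ) : ℂ := ∑ i, conj (z i) * w i

/-- `F[Q](z₁,z₂,z₃,z₄) = ⟨Q z₁, z₂⟩⟨Q z₃, z₄⟩ + ⟨Q z₃, z₂⟩⟨Q z₁, z₄⟩`. -/
noncomputable def Fform {n : ℕ} (Q : Matrix (Fin n) (Fin n) ℂ)
    (z₁ z₂ z₃ z₄ : Fin n → ℂ) : ℂ :=
  hermInner (Q.mulVec z₁) z₂ * hermInner (Q.mulVec z₃) z₄ +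
    hermInner (Q.mulVec z₃) z₂ * hermInner (Q.mulVec z₁) z₄

theorem hermInner_mulVec_single {n : ℕ} (Q : Matrix (Fin n) (Fin n) ℂ) (i j : Fin n) :
    hermInner (Q.mulVec (Pi.single j 1)) (Pi.single i 1) = conj (Q i j) := by
  simp [hermInner, Pi.single_apply]

theorem Fform_single {n : ℕ} (Q : Matrix (Fin n) (Fin n) ℂ) (i j k l : Fin n) :
    Fform Q (Pi.single j 1) (Pi.single i 1) (Pi.single l 1) (Pi.single k 1) =
      conj (Q i j * Q k l + Q i l * Q k j) := by
  simp only [Fform, hermInner_mulVec_single, map_add, map_mul]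

theorem Fform_neg {n : ℕ} (Q : Matrix (Fin n) (Fin n) ℂ) (z₁ z₂ z₃ z₄ : Fin n → ℂ) :
    Fform (-Q) z₁ z₂ z₃ z₄ = Fform Q z₁ z₂ z₃ z₄ := by
  simp [Fform, hermInner, Matrix.neg_mulVec]

/-- A matrix is determined up to sign by its symmetrized products of pairs of entries. -/
theorem Matrix.eq_or_eq_neg_of_symmetrized_mul_eq {m n K : Type*} [Field K] [NeZero (2 : K)]
    {A B : Matrix m n K}
    (h : ∀ i j k l, A i j * A k l + A i l * A k j = B i j * B k l + B i l * B k j) :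
    A = B ∨ A = -B := by
  have h2 : (2 : K) ≠ 0 := two_ne_zero
  have sign : ∀ i j, A i j = B i j ∨ A i j = -B i j := fun i j =>
    sq_eq_sq_iff_eq_or_eq_neg.mp (mul_left_cancel₀ h2 (by linear_combination h i j i j))
  have row : ∀ i j l, A i j * A i l = B i j * B i l := fun i j l =>
    mul_left_cancel₀ h2 (by linear_combination h i j i l)
  have col : ∀ i k j, A i j * A k j = B i j * B k j := fun i k j =>
    mul_left_cancel₀ h2 (by linear_combination h i j k j)
  by_contra! hne
  obtain ⟨i, j, hij⟩ : ∃ i j, A i j ≠ B i j := by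
    by_contra! hAB
    exact hne.1 (Matrix.ext hAB)
  obtain ⟨k, l, hkl⟩ : ∃ k l, A k l ≠ -B k l := by
    by_contra! hAB
    exact hne.2 (Matrix.ext hAB)
  have eij := (sign i j).resolve_left hij
  have ekl := (sign k l).resolve_right hkl
  have bij : B i j ≠ 0 := fun h0 => hij (by simp [eij, h0])
  have bkl : B k l ≠ 0 := fun h0 => hkl (by simp [ekl, h0])
  have ail : A i l = -B i l := mul_left_cancel₀ bij (by
    linear_combination -row i j l + A i l * eij)
  have ail' : A i l = B i l := mul_left_cancel₀ bkl (by
    linear_combination col i k l - A i l * ekl)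
  have bil : B i l = 0 := mul_left_cancel₀ h2 (by linear_combination ail - ail')
  have key := h i j k l
  rw [ail', bil, eij, ekl] at key
  exact mul_ne_zero h2 (mul_ne_zero bij bkl) (by linear_combination -key)

theorem stmt_0 {n : ℕ} (Q₁ Q₂ : Matrix (Fin n) (Fin n) ℂ) :
    (∀ z₁ z₂ z₃ z₄ : Fin n → ℂ, Fform Q₁ z₁ z₂ z₃ z₄ = Fform Q₂ z₁ z₂ z₃ z₄) ↔
      (Q₁ = Q₂ ∨ Q₁ = -Q₂) := by
  constructor
  · intro h
    refine Matrix.eq_or_eq_neg_of_symmetrized_mul_eq fun i j k l => ?_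
    have hs := h (Pi.single j 1) (Pi.single i 1) (Pi.single l 1) (Pi.single k 1)
    rw [Fform_single, Fform_single] at hs
    exact (starRingEnd ℂ).injective hs
  · rintro (rfl | rfl) z₁ z₂ z₃ z₄
    · rfl
    · exact Fform_neg Q₂ z₁ z₂ z₃ z₄
end

section
/- Let B be a real positive-definite m×m matrix and Q = ⟨BD, D⟩ the associated second-order operator on ℝ^m. Let ℋ^k_ℂ denote the space of complex-coefficient homogeneous polynomials of degree k on ℝ^m. Then the map (p, q) ↦ Q^k(conj(p)·q), which takes constant values since Q^k is a constant-coefficient operator of order 2k applied to a homogeneous polynomial of degree 2k, defines a (positive-definite Hermitian) inner product on ℋ^k_ℂ. In particular Q^k(|p|²) ≥ 0 with equality if and only if p = 0. -/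
open Matrix

/-- The second-order constant-coefficient operator `Q = ⟨BD, D⟩ = Σ_{i,j} B_{ij} ∂_i ∂_j`. -/
noncomputable def QB {m : ℕ} (B : Matrix (Fin m) (Fin m) ℝ) (f : (Fin m → ℝ) → ℂ) :
    (Fin m → ℝ) → ℂ :=
  fun x => ∑ i, ∑ j,
    B i j • fderiv ℝ (fun y => fderiv ℝ f y (Pi.single j 1)) x (Pi.single i 1)

/-- Evaluation of a complex-coefficient polynomial at a real point. -/
noncomputable def evalR {m : ℕ} (p : MvPolynomial (Fin m) ℂ) : (Fin m → ℝ) → ℂ :=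
  fun x => MvPolynomial.eval (fun i => (x i : ℂ)) p

/-- The sesquilinear form `(p, q) ↦ Q^k(conj(p)·q)` (evaluated at `0`). -/
noncomputable def Bform {m : ℕ} (B : Matrix (Fin m) (Fin m) ℝ) (k : ℕ)
    (p q : MvPolynomial (Fin m) ℂ) : ℂ :=
  (QB B)^[k] (fun x => (starRingEnd ℂ) (evalR p x) * evalR q x) 0

open MvPolynomial TensorProduct
open scoped ComplexOrder

section Evaluation

variable {m : ℕ}

/-- Complex conjugation of the coefficients of a polynomial. -/
noncomputable def conjPoly : MvPolynomial (Fin m) ℂ →+* MvPolynomial (Fin m) ℂ :=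
  MvPolynomial.map (starRingEnd ℂ)

/-- The operator `Σ_{i,j} B_{ij} ∂_i ∂_j` acting on polynomials. -/
noncomputable def polyQ (B : Matrix (Fin m) (Fin m) ℝ) :
    Module.End ℂ (MvPolynomial (Fin m) ℂ) :=
  ∑ i, ∑ j, (B i j : ℂ) • ((pderiv i).toLinearMap ∘ₗ (pderiv j).toLinearMap)

theorem polyQ_apply (B : Matrix (Fin m) (Fin m) ℝ) (p : MvPolynomial (Fin m) ℂ) :
    polyQ B p = ∑ i, ∑ j, (B i j : ℂ) • pderiv i (pderiv j p) := by
  simp [polyQ]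

theorem hasFDerivAt_evalR (p : MvPolynomial (Fin m) ℂ) (x : Fin m → ℝ) :
    HasFDerivAt (evalR p)
      (∑ i, evalR (pderiv i p) x •
        (Complex.ofRealCLM ∘L (ContinuousLinearMap.proj i : (Fin m → ℝ) →L[ℝ] ℝ))) x := by
  induction p using MvPolynomial.induction_on with
  | C a =>
    have hf : evalR (C a : MvPolynomial (Fin m) ℂ) = fun _ => a := by ext; simp [evalR]
    rw [hf]
    exact (hasFDerivAt_const a x).congr_fderiv (by ext v; simp [evalR])
  | add p q hp hq =>
    have hf : evalR (p + q) = evalR p + evalR q := by ext; simp [evalR]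
    rw [hf]
    refine (hp.add hq).congr_fderiv ?_
    ext v
    simp [evalR, add_mul, Finset.sum_add_distrib]
  | mul_X p n hp =>
    have hX : HasFDerivAt (fun y : Fin m → ℝ => ((y n : ℝ) : ℂ))
        (Complex.ofRealCLM ∘L (ContinuousLinearMap.proj n : (Fin m → ℝ) →L[ℝ] ℝ)) x :=
      (Complex.ofRealCLM ∘L (ContinuousLinearMap.proj n : (Fin m → ℝ) →L[ℝ] ℝ)).hasFDerivAt
    have hf : evalR (p * X n) = evalR p * fun y => ((y n : ℝ) : ℂ) := by ext; simp [evalR]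
    rw [hf]
    refine (hp.mul hX).congr_fderiv ?_
    have hd : ∀ i, evalR (pderiv i (p * X n)) x =
        (if i = n then evalR p x else 0) + x n * evalR (pderiv i p) x := fun i => by
      by_cases h : i = n
      · subst h
        simp [evalR]
      · simp [evalR, pderiv_X_of_ne (Ne.symm h), h]
    ext v
    simp [-Derivation.leibniz, hd, add_mul, Finset.sum_add_distrib, Finset.mul_sum, mul_assoc]

theorem fderiv_evalR_single (p : MvPolynomial (Fin m) ℂ) (x : Fin m → ℝ) (i : Fin m) :
    fderiv ℝ (evalR p) x (Pi.single i 1) = evalR (pderiv i p) x := by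
  rw [(hasFDerivAt_evalR p x).fderiv]
  simp [Pi.single_apply, apply_ite]

theorem QB_evalR (B : Matrix (Fin m) (Fin m) ℝ) (p : MvPolynomial (Fin m) ℂ) :
    QB B (evalR p) = evalR (polyQ B p) := by
  ext x
  simp only [QB, fderiv_evalR_single, polyQ_apply]
  simp only [evalR, map_sum, smul_eval, Complex.real_smul]

theorem iterate_QB_evalR (B : Matrix (Fin m) (Fin m) ℝ) (k : ℕ) (p : MvPolynomial (Fin m) ℂ) :
    (QB B)^[k] (evalR p) = evalR ((polyQ B ^ k) p) := by
  induction k generalizing p with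
  | zero => rfl
  | succ k ih => rw [Function.iterate_succ_apply, QB_evalR, ih, pow_succ]; rfl

theorem evalR_conjPoly (p : MvPolynomial (Fin m) ℂ) (x : Fin m → ℝ) :
    evalR (conjPoly p) x = (starRingEnd ℂ) (evalR p x) := by
  induction p using MvPolynomial.induction_on with
  | C a => simp [evalR, conjPoly]
  | add p q hp hq => simp_all [evalR]
  | mul_X p n hp => simp_all [evalR, conjPoly]

theorem conj_mul_evalR (p q : MvPolynomial (Fin m) ℂ) :
    (fun x => (starRingEnd ℂ) (evalR p x) * evalR q x) = evalR (conjPoly p * q) := by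
  ext x
  rw [← evalR_conjPoly]
  simp [evalR]

theorem Bform_eq (B : Matrix (Fin m) (Fin m) ℝ) (k : ℕ) (p q : MvPolynomial (Fin m) ℂ) :
    Bform B k p q = evalR ((polyQ B ^ k) (conjPoly p * q)) 0 := by
  rw [Bform, conj_mul_evalR, iterate_QB_evalR]

theorem conjPoly_conjPoly (p : MvPolynomial (Fin m) ℂ) : conjPoly (conjPoly p) = p := by
  ext d
  simp [conjPoly, coeff_map]

theorem conjPoly_smul_ofReal (r : ℝ) (p : MvPolynomial (Fin m) ℂ) :
    conjPoly ((r : ℂ) • p) = (r : ℂ) • conjPoly p := by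
  ext d
  simp [conjPoly, coeff_map]

theorem pderiv_conjPoly (i : Fin m) (p : MvPolynomial (Fin m) ℂ) :
    pderiv i (conjPoly p) = conjPoly (pderiv i p) :=
  pderiv_map

theorem polyQ_conjPoly (B : Matrix (Fin m) (Fin m) ℝ) (p : MvPolynomial (Fin m) ℂ) :
    polyQ B (conjPoly p) = conjPoly (polyQ B p) := by
  simp only [polyQ_apply, map_sum, conjPoly_smul_ofReal, pderiv_conjPoly]

theorem polyQ_pow_conjPoly (B : Matrix (Fin m) (Fin m) ℝ) (k : ℕ) (p : MvPolynomial (Fin m) ℂ) :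
    (polyQ B ^ k) (conjPoly p) = conjPoly ((polyQ B ^ k) p) := by
  induction k generalizing p with
  | zero => rfl
  | succ k ih => rw [pow_succ, Module.End.mul_apply, polyQ_conjPoly, ih]; rfl

theorem isHomogeneous_conjPoly {n : ℕ} {p : MvPolynomial (Fin m) ℂ} (hp : p.IsHomogeneous n) :
    (conjPoly p).IsHomogeneous n :=
  hp.map _

theorem isHomogeneous_smul {n : ℕ} {p : MvPolynomial (Fin m) ℂ} (hp : p.IsHomogeneous n) (c : ℂ) :
    (c • p).IsHomogeneous n :=
  (homogeneousSubmodule (Fin m) ℂ n).smul_mem c hp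

theorem isHomogeneous_polyQ (B : Matrix (Fin m) (Fin m) ℝ) {n : ℕ}
    {p : MvPolynomial (Fin m) ℂ} (hp : p.IsHomogeneous n) :
    (polyQ B p).IsHomogeneous (n - 2) := by
  rw [polyQ_apply]
  exact IsHomogeneous.sum _ _ _ fun i _ => IsHomogeneous.sum _ _ _ fun j _ =>
    isHomogeneous_smul hp.pderiv.pderiv _

theorem isHomogeneous_polyQ_pow (B : Matrix (Fin m) (Fin m) ℝ) (k : ℕ) {n : ℕ}
    {p : MvPolynomial (Fin m) ℂ} (hp : p.IsHomogeneous n) :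
    ((polyQ B ^ k) p).IsHomogeneous (n - 2 * k) := by
  induction k generalizing p n with
  | zero => simpa using hp
  | succ k ih =>
    rw [pow_succ, Module.End.mul_apply]
    convert ih (isHomogeneous_polyQ B hp) using 1
    omega

theorem evalR_eq_of_isHomogeneous_zero {p : MvPolynomial (Fin m) ℂ} (hp : p.IsHomogeneous 0)
    (x y : Fin m → ℝ) : evalR p x = evalR p y := by
  rw [← totalDegree_zero_iff_isHomogeneous, totalDegree_eq_zero_iff_eq_C] at hp
  rw [hp]
  simp [evalR]

theorem evalR_zero_of_isHomogeneous {n : ℕ} {p : MvPolynomial (Fin m) ℂ}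
    (hp : p.IsHomogeneous n) (hn : n ≠ 0) : evalR p 0 = 0 := by
  have h : evalR p 0 = constantCoeff p := by
    simp only [evalR, Pi.zero_apply, Complex.ofReal_zero]
    rw [eval_zero']
  rw [h, constantCoeff_eq]
  exact hp.coeff_eq_zero (by simpa using hn.symm)

end Evaluation

section Carre

variable {m : ℕ} (A B : Matrix (Fin m) (Fin m) ℝ)

/-- The derivation `Σ_i A_{ai} ∂_i` along the `a`-th row of `A`. -/
noncomputable def rowDeriv (a : Fin m) :
    Derivation ℂ (MvPolynomial (Fin m) ℂ) (MvPolynomial (Fin m) ℂ) :=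
  ∑ i, (A a i : ℂ) • pderiv i

theorem rowDeriv_apply (a : Fin m) (p : MvPolynomial (Fin m) ℂ) :
    rowDeriv A a p = ∑ i, (A a i : ℂ) • pderiv i p := by
  change Derivation.coeFnAddMonoidHom (∑ i, (A a i : ℂ) • pderiv i) p = _
  rw [map_sum, Finset.sum_apply]
  rfl

theorem pderiv_pderiv_comm (i j : Fin m) (p : MvPolynomial (Fin m) ℂ) :
    pderiv i (pderiv j p) = pderiv j (pderiv i p) := by
  classical
  let D (i : Fin m) : Derivation ℂ (MvPolynomial (Fin m) ℂ) (MvPolynomial (Fin m) ℂ) := pderiv i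
  have h : ⁅D i, D j⁆ = 0 := by
    refine MvPolynomial.derivation_ext fun n => ?_
    simp [D, Derivation.commutator_apply, pderiv_X, Pi.single_apply, apply_ite]
  simpa [D, Derivation.commutator_apply, sub_eq_zero] using congrArg (fun E => E p) h

theorem pderiv_rowDeriv (i a : Fin m) (p : MvPolynomial (Fin m) ℂ) :
    pderiv i (rowDeriv A a p) = rowDeriv A a (pderiv i p) := by
  simp only [rowDeriv_apply, map_sum, Derivation.map_smul, pderiv_pderiv_comm i]

theorem commute_rowDeriv_polyQ (a : Fin m) :
    Commute (rowDeriv A a).toLinearMap (polyQ B) := by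
  refine LinearMap.ext fun p => ?_
  change rowDeriv A a (polyQ B p) = polyQ B (rowDeriv A a p)
  simp only [polyQ_apply, map_sum, Derivation.map_smul, pderiv_rowDeriv]

theorem polyQ_conjTranspose_mul_self (p : MvPolynomial (Fin m) ℂ) :
    polyQ (Aᴴ * A) p = ∑ a, rowDeriv A a (rowDeriv A a p) := by
  simp only [polyQ_apply, rowDeriv_apply, map_sum, Derivation.map_smul, Finset.smul_sum,
    smul_smul, Matrix.mul_apply, Matrix.conjTranspose_apply, star_trivial, Complex.ofReal_sum,
    Complex.ofReal_mul, Finset.sum_smul]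
  rw [Finset.sum_congr rfl fun i _ => Finset.sum_comm, Finset.sum_comm]
  exact Finset.sum_congr rfl fun a _ => Finset.sum_comm.trans <|
    Finset.sum_congr rfl fun j _ => Finset.sum_congr rfl fun i _ => by
      rw [mul_comm, pderiv_pderiv_comm]

theorem rowDeriv_conjPoly (a : Fin m) (p : MvPolynomial (Fin m) ℂ) :
    rowDeriv A a (conjPoly p) = conjPoly (rowDeriv A a p) := by
  simp only [rowDeriv_apply, map_sum, conjPoly_smul_ofReal, pderiv_conjPoly]

theorem isHomogeneous_rowDeriv (a : Fin m) {n : ℕ} {p : MvPolynomial (Fin m) ℂ}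
    (hp : p.IsHomogeneous n) : (rowDeriv A a p).IsHomogeneous (n - 1) := by
  rw [rowDeriv_apply]
  exact IsHomogeneous.sum _ _ _ fun i _ => isHomogeneous_smul hp.pderiv _

theorem exists_rowDeriv_ne_zero (hA : IsUnit A) {n : ℕ} (hn : n ≠ 0)
    {p : MvPolynomial (Fin m) ℂ} (hp : p.IsHomogeneous n) (hp0 : p ≠ 0) :
    ∃ a, rowDeriv A a p ≠ 0 := by
  by_contra! h
  obtain ⟨C, -, hC⟩ := isUnit_iff_exists.mp hA
  have hpd : ∀ i, pderiv i p = 0 := fun i => by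
    have hsum : ∑ a, (C i a : ℂ) • rowDeriv A a p = pderiv i p := by
      simp only [rowDeriv_apply, Finset.smul_sum, smul_smul]
      rw [Finset.sum_comm]
      simp only [← Finset.sum_smul]
      have : ∀ j, ∑ a, (C i a : ℂ) * (A a j : ℂ) = if i = j then 1 else 0 := fun j => by
        have h := congrArg Complex.ofReal (congrFun (congrFun hC i) j)
        rw [Matrix.mul_apply, Matrix.one_apply] at h
        simpa [apply_ite] using h
      simp [this]
    simpa [h] using hsum.symm
  have := hp.sum_X_mul_pderiv
  simp only [hpd, mul_zero, Finset.sum_const_zero] at this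
  simp_all

/-- The operator `Σ_a D_a ⊗ D_a` for the row derivations `D_a` of `A`. -/
noncomputable def carre :
    Module.End ℂ (MvPolynomial (Fin m) ℂ ⊗[ℂ] MvPolynomial (Fin m) ℂ) :=
  ∑ a, TensorProduct.map (rowDeriv A a).toLinearMap (rowDeriv A a).toLinearMap

theorem carre_tmul (p q : MvPolynomial (Fin m) ℂ) :
    carre A (p ⊗ₜ q) = ∑ a, rowDeriv A a p ⊗ₜ[ℂ] rowDeriv A a q := by
  simp [carre]

/-- Multiplication followed by evaluation at the origin. -/
noncomputable def mulEval :
    MvPolynomial (Fin m) ℂ ⊗[ℂ] MvPolynomial (Fin m) ℂ →ₗ[ℂ] ℂ :=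
  (aeval (R := ℂ) (fun _ : Fin m => (0 : ℂ))).toLinearMap ∘ₗ LinearMap.mul' ℂ _

theorem mulEval_tmul (p q : MvPolynomial (Fin m) ℂ) :
    mulEval (p ⊗ₜ q) = evalR p 0 * evalR q 0 := by
  simp [mulEval, evalR, aeval_eq_eval]

theorem mulEval_carre_pow_eq_zero_right (l : ℕ) {n : ℕ} (p : MvPolynomial (Fin m) ℂ)
    {q : MvPolynomial (Fin m) ℂ} (hq : q.IsHomogeneous n) (hn : l < n) :
    mulEval ((carre A ^ l) (p ⊗ₜ q)) = 0 := by
  induction l generalizing n p q with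
  | zero => simp [mulEval_tmul, evalR_zero_of_isHomogeneous hq hn.ne']
  | succ l ih =>
    rw [pow_succ, Module.End.mul_apply, carre_tmul, map_sum, map_sum]
    exact Finset.sum_eq_zero fun a _ => ih _ (isHomogeneous_rowDeriv A a hq) (by omega)

theorem mulEval_carre_pow_eq_zero_left (l : ℕ) {n : ℕ} {p : MvPolynomial (Fin m) ℂ}
    (q : MvPolynomial (Fin m) ℂ) (hp : p.IsHomogeneous n) (hn : l < n) :
    mulEval ((carre A ^ l) (p ⊗ₜ q)) = 0 := by
  induction l generalizing n p q with
  | zero => simp [mulEval_tmul, evalR_zero_of_isHomogeneous hp hn.ne']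
  | succ l ih =>
    rw [pow_succ, Module.End.mul_apply, carre_tmul, map_sum, map_sum]
    exact Finset.sum_eq_zero fun a _ => ih _ (isHomogeneous_rowDeriv A a hp) (by omega)

theorem mulEval_carre_pow_nonneg (l : ℕ) (p : MvPolynomial (Fin m) ℂ) :
    0 ≤ mulEval ((carre A ^ l) (conjPoly p ⊗ₜ p)) := by
  induction l generalizing p with
  | zero =>
    rw [pow_zero, Module.End.one_apply, mulEval_tmul, evalR_conjPoly]
    exact star_mul_self_nonneg _
  | succ l ih =>
    rw [pow_succ, Module.End.mul_apply, carre_tmul, map_sum, map_sum]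
    exact Finset.sum_nonneg fun a _ => by rw [rowDeriv_conjPoly]; exact ih _

theorem mulEval_carre_pow_pos (hA : IsUnit A) (l : ℕ) {p : MvPolynomial (Fin m) ℂ}
    (hp : p.IsHomogeneous l) (hp0 : p ≠ 0) :
    0 < mulEval ((carre A ^ l) (conjPoly p ⊗ₜ p)) := by
  induction l generalizing p with
  | zero =>
    rw [pow_zero, Module.End.one_apply, mulEval_tmul, evalR_conjPoly]
    rw [← totalDegree_zero_iff_isHomogeneous, totalDegree_eq_zero_iff_eq_C] at hp
    have : evalR p 0 ≠ 0 := by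
      rw [hp] at hp0 ⊢
      simpa [evalR] using hp0
    exact star_mul_self_pos (IsRegular.of_ne_zero this)
  | succ l ih =>
    rw [pow_succ, Module.End.mul_apply, carre_tmul, map_sum, map_sum]
    obtain ⟨a, ha⟩ := exists_rowDeriv_ne_zero A hA l.succ_ne_zero hp hp0
    refine Finset.sum_pos' (fun a _ => ?_) ⟨a, Finset.mem_univ a, ?_⟩
    · rw [rowDeriv_conjPoly]
      exact mulEval_carre_pow_nonneg A l _
    · rw [rowDeriv_conjPoly]
      exact ih (isHomogeneous_rowDeriv A a hp) ha

/-- The operator induced by `polyQ (Aᴴ * A)` on the tensor square through the product rule. -/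
noncomputable def leibnizQ :
    Module.End ℂ (MvPolynomial (Fin m) ℂ ⊗[ℂ] MvPolynomial (Fin m) ℂ) :=
  (2 : ℕ) • carre A + (TensorProduct.map (polyQ (Aᴴ * A)) 1 +
    TensorProduct.map 1 (polyQ (Aᴴ * A)))

theorem leibnizQ_tmul (p q : MvPolynomial (Fin m) ℂ) :
    leibnizQ A (p ⊗ₜ q) = (2 : ℕ) • (∑ a, rowDeriv A a p ⊗ₜ[ℂ] rowDeriv A a q) +
      (polyQ (Aᴴ * A) p ⊗ₜ q + p ⊗ₜ polyQ (Aᴴ * A) q) := by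
  rw [← carre_tmul]
  rfl

theorem polyQ_mul (t : MvPolynomial (Fin m) ℂ ⊗[ℂ] MvPolynomial (Fin m) ℂ) :
    polyQ (Aᴴ * A) (LinearMap.mul' ℂ _ t) = LinearMap.mul' ℂ _ (leibnizQ A t) := by
  induction t with
  | zero => simp
  | add s t hs ht => simp only [map_add, hs, ht]
  | tmul p q =>
    simp only [leibnizQ_tmul, LinearMap.mul'_apply, map_add, map_sum, map_nsmul,
      polyQ_conjTranspose_mul_self, Derivation.leibniz, smul_eq_mul,
      Finset.sum_mul, Finset.mul_sum, Finset.smul_sum, ← Finset.sum_add_distrib]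
    exact Finset.sum_congr rfl fun a _ => by ring

theorem polyQ_pow_mul (k : ℕ) (t : MvPolynomial (Fin m) ℂ ⊗[ℂ] MvPolynomial (Fin m) ℂ) :
    (polyQ (Aᴴ * A) ^ k) (LinearMap.mul' ℂ _ t) = LinearMap.mul' ℂ _ ((leibnizQ A ^ k) t) := by
  induction k generalizing t with
  | zero => rfl
  | succ k ih =>
    rw [pow_succ, pow_succ, Module.End.mul_apply, Module.End.mul_apply, polyQ_mul, ih]

theorem evalR_polyQ_pow_mul (k : ℕ) (p q : MvPolynomial (Fin m) ℂ) :
    evalR ((polyQ (Aᴴ * A) ^ k) (p * q)) 0 =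
      ∑ u ∈ Finset.HasAntidiagonal.antidiagonal k, k.choose u.1 •
        ∑ v ∈ Finset.HasAntidiagonal.antidiagonal u.2,
        (u.2.choose v.1 * 2 ^ u.1) • mulEval ((carre A ^ u.1)
          ((polyQ (Aᴴ * A) ^ v.1) p ⊗ₜ (polyQ (Aᴴ * A) ^ v.2) q)) := by
  set Q := polyQ (Aᴴ * A) with hQ
  have hXY : Commute (TensorProduct.map Q (1 : Module.End ℂ (MvPolynomial (Fin m) ℂ)))
      (TensorProduct.map 1 Q) := by
    simp only [Commute, SemiconjBy, ← TensorProduct.map_mul, one_mul, mul_one]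
  have hX : Commute (carre A) (TensorProduct.map Q 1) := by
    refine Commute.sum_left _ _ _ fun a _ => ?_
    simp only [Commute, SemiconjBy, ← TensorProduct.map_mul, one_mul, mul_one]
    rw [(commute_rowDeriv_polyQ A _ a).eq]
  have hY : Commute (carre A) (TensorProduct.map 1 Q) := by
    refine Commute.sum_left _ _ _ fun a _ => ?_
    simp only [Commute, SemiconjBy, ← TensorProduct.map_mul, one_mul, mul_one]
    rw [(commute_rowDeriv_polyQ A _ a).eq]
  have hΓ : Commute ((2 : ℕ) • carre A) (TensorProduct.map Q 1 + TensorProduct.map 1 Q) :=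
    (hX.add_right hY).smul_left 2
  have h := polyQ_pow_mul A k (p ⊗ₜ q)
  rw [LinearMap.mul'_apply] at h
  rw [h]
  change mulEval _ = _
  rw [leibnizQ, ← hQ, hΓ.add_pow']
  simp only [hXY.add_pow', smul_pow, TensorProduct.map_pow, one_pow, LinearMap.sum_apply, map_sum,
    LinearMap.smul_apply, map_nsmul, Module.End.mul_apply, TensorProduct.map_tmul,
    Module.End.one_apply, smul_smul, Finset.smul_sum]

theorem mulEval_carre_pow_polyQ_nonneg {k l i j : ℕ} (h : l + (i + j) = k)
    {p : MvPolynomial (Fin m) ℂ} (hp : p.IsHomogeneous k) :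
    0 ≤ mulEval ((carre A ^ l) ((polyQ B ^ i) (conjPoly p) ⊗ₜ (polyQ B ^ j) p)) := by
  rcases lt_trichotomy i j with hij | rfl | hij
  · exact (mulEval_carre_pow_eq_zero_left A l _
      (isHomogeneous_polyQ_pow B i (isHomogeneous_conjPoly hp)) (by omega)).ge
  · rw [polyQ_pow_conjPoly]
    exact mulEval_carre_pow_nonneg A l _
  · exact (mulEval_carre_pow_eq_zero_right A l _
      (isHomogeneous_polyQ_pow B j hp) (by omega)).ge

theorem evalR_polyQ_pow_conjPoly_mul_pos (hA : IsUnit A) {k : ℕ} {p : MvPolynomial (Fin m) ℂ}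
    (hp : p.IsHomogeneous k) (hp0 : p ≠ 0) :
    0 < evalR ((polyQ (Aᴴ * A) ^ k) (conjPoly p * p)) 0 := by
  rw [evalR_polyQ_pow_mul]
  refine Finset.sum_pos' (fun u hu => ?_) ⟨(k, 0), by simp, ?_⟩
  · refine nsmul_nonneg (Finset.sum_nonneg fun v hv => nsmul_nonneg ?_ _) _
    rw [Finset.HasAntidiagonal.mem_antidiagonal] at hu hv
    exact mulEval_carre_pow_polyQ_nonneg A _ (by omega) hp
  · simpa using mulEval_carre_pow_pos A hA k hp hp0

end Carre

theorem Matrix.PosDef.exists_isUnit_conjTranspose_mul_self {m : ℕ}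
    {B : Matrix (Fin m) (Fin m) ℝ} (hB : B.PosDef) :
    ∃ A : Matrix (Fin m) (Fin m) ℝ, IsUnit A ∧ B = Aᴴ * A := by
  open scoped MatrixOrder in
  obtain ⟨A, rfl⟩ := CStarAlgebra.nonneg_iff_eq_star_mul_self.mp hB.posSemidef.nonneg
  exact ⟨A, isUnit_of_mul_isUnit_right hB.isUnit, rfl⟩

theorem Bform_self_pos {m k : ℕ} {B : Matrix (Fin m) (Fin m) ℝ} (hB : B.PosDef)
    {p : MvPolynomial (Fin m) ℂ} (hp : p.IsHomogeneous k) (hp0 : p ≠ 0) : 0 < Bform B k p p := by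
  obtain ⟨A, hA, rfl⟩ := hB.exists_isUnit_conjTranspose_mul_self
  rw [Bform_eq]
  exact evalR_polyQ_pow_conjPoly_mul_pos A hA hp hp0

/-- For `B` positive definite, `(p, q) ↦ Q^k(conj(p)q)` takes constant values on homogeneous
polynomials of degree `k` and defines a positive-definite Hermitian inner product on `ℋ^k_ℂ`. -/
theorem stmt_3 (m k : ℕ) (B : Matrix (Fin m) (Fin m) ℝ) (hB : B.PosDef) :
    (∀ p q : MvPolynomial (Fin m) ℂ, p.IsHomogeneous k → q.IsHomogeneous k →
      ∀ x, (QB B)^[k] (fun y => (starRingEnd ℂ) (evalR p y) * evalR q y) x = Bform B k p q) ∧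
    (∀ p q : MvPolynomial (Fin m) ℂ, p.IsHomogeneous k → q.IsHomogeneous k →
      Bform B k q p = (starRingEnd ℂ) (Bform B k p q)) ∧
    (∀ p q₁ q₂ : MvPolynomial (Fin m) ℂ, p.IsHomogeneous k → q₁.IsHomogeneous k →
      q₂.IsHomogeneous k → Bform B k p (q₁ + q₂) = Bform B k p q₁ + Bform B k p q₂) ∧
    (∀ p q : MvPolynomial (Fin m) ℂ, p.IsHomogeneous k → q.IsHomogeneous k → ∀ c : ℂ,
      Bform B k p (c • q) = c * Bform B k p q) ∧
    (∀ p : MvPolynomial (Fin m) ℂ, p.IsHomogeneous k →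
      0 ≤ (Bform B k p p).re ∧ (Bform B k p p).im = 0 ∧ (Bform B k p p = 0 ↔ p = 0)) := by
  refine ⟨fun p q hp hq x => ?_, fun p q _ _ => ?_, fun p q₁ q₂ _ _ _ => ?_,
    fun p q _ _ c => ?_, fun p hp => ?_⟩
  · rw [Bform_eq, conj_mul_evalR, iterate_QB_evalR]
    have h := isHomogeneous_polyQ_pow B k ((isHomogeneous_conjPoly hp).mul hq)
    rw [show k + k - 2 * k = 0 by omega] at h
    exact evalR_eq_of_isHomogeneous_zero h x 0
  · rw [Bform_eq, Bform_eq, ← evalR_conjPoly, ← polyQ_pow_conjPoly, map_mul conjPoly,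
      conjPoly_conjPoly, mul_comm]
  · simp [Bform_eq, mul_add, evalR]
  · simp [Bform_eq, evalR]
  · rcases eq_or_ne p 0 with rfl | hp0
    · simp [Bform_eq, evalR]
    · have h := Bform_self_pos hB hp hp0
      have h' := Complex.pos_iff.mp h
      exact ⟨h'.1.le, h'.2.symm, by simp [h.ne', hp0]⟩
end
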